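/- Let x_1,…,x_n (robots) and y_1,…,y_n (targets) be 2n mutually independent uniformly distributed random points in the unit square Q = [0,1]² ⊂ ℝ². Fix r > 0 and ε with 0 < ε < 1, and set b := ⌈√2 / r⌉. If n ≥ b² · log( b² / ε ), then with probability at least 1 − ε every target is within distance r of some robot, i.e., for every j ∈ {1,…,n} there exists i ∈ {1,…,n} with ‖y_j − x_i‖₂ ≤ r. -/

import Mathlib

open MeasureTheory

/-- The closed unit square `[0,1]² ⊂ ℝ²` (with the Euclidean norm). -/
def unitSquare : Set (EuclideanSpace ℝ (Fin 2)) :=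
  {p | ∀ i, p i ∈ Set.Icc (0 : ℝ) 1}

/-- The uniform probability measure on the unit square. -/
noncomputable def unifSquare : Measure (EuclideanSpace ℝ (Fin 2)) :=
  volume.restrict unitSquare

/-!
Cut the `d`-dimensional cube into `b ^ d` congruent cells. Each has mass `b ^ (-d)` and, as
`b ≥ √d / r`, diameter at most `r`, so once every cell contains a robot, every point of the cube is
within `r` of one. A given cell is missed by all `n` robots with probability
`(1 - b ^ (-d)) ^ n ≤ exp (-n / b ^ d)`, and the union bound over the cells leaves a failure
probability of at most `ε`. Of the targets only membership in the cube matters, which holds almost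
surely.
-/

open Set

theorem mul_exp_neg_le_of_log_div_le {N ε t : ℝ} (hN : 0 ≤ N) (hε : 0 < ε)
    (h : Real.log (N / ε) ≤ t) : N * Real.exp (-t) ≤ ε := by
  rcases hN.eq_or_lt with rfl | hN
  · simpa using hε.le
  · have hexp : N / ε ≤ Real.exp t := (Real.log_le_iff_le_exp (by positivity)).1 h
    rw [Real.exp_neg, ← div_eq_mul_inv, div_le_iff₀ (Real.exp_pos t), mul_comm]
    exact (div_le_iff₀ hε).1 hexp

theorem measure_le_measure_prod_of_ae {α β : Type*} [MeasurableSpace α] [MeasurableSpace β]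
    {μ : Measure α} {ν : Measure β} [IsProbabilityMeasure ν]
    {s : Set α} {t : Set β} {u : Set (α × β)} (ht : ∀ᵐ y ∂ν, y ∈ t) (hu : s ×ˢ t ⊆ u) :
    μ s ≤ μ.prod ν u := by
  have ht' : ν t = 1 := (measure_congr (Filter.eventuallyEq_univ.2 ht)).trans measure_univ
  calc μ s = μ.prod ν (s ×ˢ t) := by rw [Measure.prod_prod, ht', mul_one]
    _ ≤ μ.prod ν u := measure_mono hu

section Sampling

variable {Ω κ σ : Type*} [MeasurableSpace Ω] [Fintype κ] [Fintype σ] {μ : Measure Ω}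
  [IsProbabilityMeasure μ] {A : κ → Set Ω} {p ε : ℝ}

theorem measureReal_pi_forall_notMem_le_exp {s : Set Ω} (hs : MeasurableSet s) (hp : p ≤ μ.real s) :
    (Measure.pi fun _ : σ => μ).real {x | ∀ i, x i ∉ s} ≤
      Real.exp (-(Fintype.card σ * p)) := by
  have hpi : {x : σ → Ω | ∀ i, x i ∉ s} = univ.pi fun _ => sᶜ := by ext; simp
  calc (Measure.pi fun _ : σ => μ).real {x | ∀ i, x i ∉ s}
      = (1 - μ.real s) ^ Fintype.card σ := by
        rw [hpi, measureReal_def, Measure.pi_pi, ENNReal.toReal_prod, Finset.prod_const,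
          Finset.card_univ, ← measureReal_def, probReal_compl_eq_one_sub hs]
    _ ≤ Real.exp (-p) ^ Fintype.card σ := by
        gcongr
        · exact sub_nonneg.2 measureReal_le_one
        · linarith [Real.one_sub_le_exp_neg p]
    _ = Real.exp (-(Fintype.card σ * p)) := by rw [← Real.exp_nat_mul, mul_neg]

theorem measureReal_pi_exists_forall_notMem_le (hA : ∀ k, MeasurableSet (A k))
    (hp : ∀ k, p ≤ μ.real (A k)) (hε : 0 < ε)
    (hn : Real.log (Fintype.card κ / ε) ≤ Fintype.card σ * p) :
    (Measure.pi fun _ : σ => μ).real {x | ∃ k, ∀ i, x i ∉ A k} ≤ ε := by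
  calc (Measure.pi fun _ : σ => μ).real {x | ∃ k, ∀ i, x i ∉ A k}
      ≤ ∑ k, (Measure.pi fun _ : σ => μ).real {x | ∀ i, x i ∉ A k} := by
        rw [ofPred_exists]
        exact measureReal_iUnion_fintype_le _
    _ ≤ ∑ _k : κ, Real.exp (-(Fintype.card σ * p)) :=
        Finset.sum_le_sum fun k _ => measureReal_pi_forall_notMem_le_exp (hA k) (hp k)
    _ = Fintype.card κ * Real.exp (-(Fintype.card σ * p)) := by simp
    _ ≤ ε := mul_exp_neg_le_of_log_div_le (Nat.cast_nonneg _) hε hn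

theorem one_sub_le_measureReal_pi_forall_exists_mem (hA : ∀ k, MeasurableSet (A k))
    (hp : ∀ k, p ≤ μ.real (A k)) (hε : 0 < ε)
    (hn : Real.log (Fintype.card κ / ε) ≤ Fintype.card σ * p) :
    1 - ε ≤ (Measure.pi fun _ : σ => μ).real {x | ∀ k, ∃ i, x i ∈ A k} := by
  have hmeas : MeasurableSet {x : σ → Ω | ∀ k, ∃ i, x i ∈ A k} := by
    simp only [ofPred_forall, ofPred_exists]
    exact .iInter fun k => .iUnion fun i => measurable_pi_apply i (hA k)
  have hcompl : {x : σ → Ω | ∀ k, ∃ i, x i ∈ A k}ᶜ = {x | ∃ k, ∀ i, x i ∉ A k} := by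
    ext; simp
  have hmiss := measureReal_pi_exists_forall_notMem_le hA hp hε hn
  rw [← hcompl, probReal_compl_eq_one_sub hmeas] at hmiss
  linarith

end Sampling

section Grid

variable {ι : Type*}

/-- The closed axis-parallel box `∏ᵢ [aᵢ, cᵢ]` as a subset of Euclidean space; empty when
`c i < a i` for some `i`. -/
def euclideanBox (a c : ι → ℝ) : Set (EuclideanSpace ℝ ι) :=
  {x | ∀ i, x i ∈ Icc (a i) (c i)}

variable (ι) in
/-- The closed unit cube in Euclidean space; for `ι = Fin 2` this is `unitSquare` definitionally. -/
def unitCube : Set (EuclideanSpace ℝ ι) :=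
  euclideanBox (fun _ => 0) fun _ => 1

/-- The cell with index `k` of the subdivision of the unit cube into congruent cubes of side
`1 / b`. Cells are closed, so neighbouring ones share a face. -/
def gridCell {b : ℕ} (k : ι → Fin b) : Set (EuclideanSpace ℝ ι) :=
  euclideanBox (fun i => (k i : ℝ) / b) fun i => ((k i : ℝ) + 1) / b

theorem euclideanBox_eq_preimage_ofLp (a c : ι → ℝ) :
    euclideanBox a c = WithLp.ofLp ⁻¹' Icc a c := by
  ext x
  simp only [euclideanBox, mem_ofPred_eq, mem_preimage, ← pi_univ_Icc, mem_univ_pi]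

theorem measurableSet_euclideanBox [Countable ι] (a c : ι → ℝ) :
    MeasurableSet (euclideanBox a c) := by
  rw [euclideanBox_eq_preimage_ofLp]
  exact WithLp.measurable_ofLp 2 _ measurableSet_Icc

theorem exists_fin_mem_Icc_div {b : ℕ} (hb : 0 < b) {t : ℝ} (ht : t ∈ Icc (0 : ℝ) 1) :
    ∃ m : Fin b, t ∈ Icc ((m : ℝ) / b) (((m : ℝ) + 1) / b) := by
  have hb' : (0 : ℝ) < b := Nat.cast_pos.2 hb
  have htb : ⌈t * b⌉₊ ≤ b := Nat.ceil_le.2 (mul_le_of_le_one_left hb'.le ht.2)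
  refine ⟨⟨⌈t * b⌉₊ - 1, by omega⟩, (div_le_iff₀ hb').2 ?_, (le_div_iff₀ hb').2 ?_⟩
  · rcases Nat.eq_zero_or_pos ⌈t * b⌉₊ with h | h
    · simpa [h] using mul_nonneg ht.1 hb'.le
    · exact (Nat.lt_ceil.1 (Nat.sub_lt h one_pos)).le
  · exact (Nat.le_ceil _).trans (mod_cast le_tsub_add)

theorem exists_mem_gridCell {b : ℕ} (hb : 0 < b) {x : EuclideanSpace ℝ ι} (hx : x ∈ unitCube ι) :
    ∃ k : ι → Fin b, x ∈ gridCell k := by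
  choose k hk using fun i => exists_fin_mem_Icc_div hb (hx i)
  exact ⟨k, hk⟩

theorem gridCell_subset_unitCube {b : ℕ} (k : ι → Fin b) : gridCell k ⊆ unitCube ι := by
  intro x hx i
  have hk : ((k i : ℕ) : ℝ) + 1 ≤ b := mod_cast (k i).isLt
  exact ⟨le_trans (by positivity) (hx i).1, (hx i).2.trans (div_le_one_of_le₀ hk b.cast_nonneg)⟩

variable [Fintype ι]

theorem volume_euclideanBox (a c : ι → ℝ) :
    volume (euclideanBox a c) = ∏ i, ENNReal.ofReal (c i - a i) := by
  rw [euclideanBox_eq_preimage_ofLp, (PiLp.volume_preserving_ofLp ι).measure_preimage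
    measurableSet_Icc.nullMeasurableSet, Real.volume_Icc_pi]

theorem dist_le_sqrt_card_mul {x y : EuclideanSpace ℝ ι} {δ : ℝ} (hδ : 0 ≤ δ)
    (h : ∀ i, dist (x i) (y i) ≤ δ) : dist x y ≤ √(Fintype.card ι) * δ := by
  rw [EuclideanSpace.dist_eq]
  refine Real.sqrt_le_iff.2 ⟨by positivity, ?_⟩
  calc ∑ i, dist (x i) (y i) ^ 2 ≤ ∑ _i : ι, δ ^ 2 := by gcongr with i; exact h i
    _ = (√(Fintype.card ι) * δ) ^ 2 := by
      rw [mul_pow, Real.sq_sqrt (Nat.cast_nonneg _), Finset.sum_const, Finset.card_univ,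
        nsmul_eq_mul]

theorem dist_le_of_mem_gridCell {b : ℕ} {k : ι → Fin b} {x y : EuclideanSpace ℝ ι}
    (hx : x ∈ gridCell k) (hy : y ∈ gridCell k) : dist x y ≤ √(Fintype.card ι) / b := by
  rw [div_eq_mul_one_div]
  refine dist_le_sqrt_card_mul (by positivity) fun i => ?_
  exact (Real.dist_le_of_mem_Icc (hx i) (hy i)).trans_eq (by ring)

variable (ι) in
/-- The uniform distribution on the unit cube, a probability measure since the cube has volume `1`;
for `ι = Fin 2` this is `unifSquare` definitionally. -/
noncomputable def unifCube : Measure (EuclideanSpace ℝ ι) :=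
  volume.restrict (unitCube ι)

instance isProbabilityMeasure_unifCube : IsProbabilityMeasure (unifCube ι) :=
  ⟨by simp [unifCube, unitCube, volume_euclideanBox]⟩

instance isProbabilityMeasure_unifSquare : IsProbabilityMeasure unifSquare :=
  isProbabilityMeasure_unifCube (ι := Fin 2)

theorem ae_mem_unitCube : ∀ᵐ x ∂unifCube ι, x ∈ unitCube ι :=
  ae_restrict_mem (measurableSet_euclideanBox _ _)

theorem measureReal_gridCell {b : ℕ} (k : ι → Fin b) :
    (unifCube ι).real (gridCell k) = ((b : ℝ) ^ Fintype.card ι)⁻¹ := by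
  have hside : ∀ i, ((k i : ℝ) + 1) / b - (k i : ℝ) / b = (b : ℝ)⁻¹ := fun i => by ring
  rw [measureReal_def, unifCube, Measure.restrict_eq_self _ (gridCell_subset_unitCube k), gridCell,
    volume_euclideanBox]
  simp [hside]

end Grid

theorem stmt_12_general {ι σ : Type*} [Fintype ι] [Nonempty ι] [Fintype σ] {r ε : ℝ} (hr : 0 < r)
    (hε : 0 < ε)
    (hn : (⌈√(Fintype.card ι) / r⌉₊ : ℝ) ^ Fintype.card ι *
      Real.log ((⌈√(Fintype.card ι) / r⌉₊ : ℝ) ^ Fintype.card ι / ε) ≤ Fintype.card σ) :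
    1 - ε ≤ (Measure.pi fun _ : σ => unifCube ι).real
      {x | ∀ y ∈ unitCube ι, ∃ i, ‖y - x i‖ ≤ r} := by
  set b := ⌈√(Fintype.card ι) / r⌉₊
  have hb : 0 < b := Nat.ceil_pos.2 (by positivity)
  have hdiam : √(Fintype.card ι) / b ≤ r :=
    div_le_of_le_mul₀ b.cast_nonneg hr.le ((div_le_iff₀' hr).1 (Nat.le_ceil _))
  have hcells : 1 - ε ≤ (Measure.pi fun _ : σ => unifCube ι).real
      {x | ∀ k : ι → Fin b, ∃ i, x i ∈ gridCell k} := by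
    classical
    refine one_sub_le_measureReal_pi_forall_exists_mem
      (fun k => measurableSet_euclideanBox _ _) (fun k => (measureReal_gridCell k).ge) hε ?_
    rw [← div_eq_mul_inv, le_div_iff₀' (by positivity)]
    simpa using hn
  refine hcells.trans (measureReal_mono fun x hx y hy => ?_)
  obtain ⟨k, hk⟩ := exists_mem_gridCell hb hy
  obtain ⟨i, hi⟩ := hx k
  exact ⟨i, (dist_eq_norm y (x i)).ge.trans ((dist_le_of_mem_gridCell hk hi).trans hdiam)⟩

/-- let `x₁,…,x_n` (robots) and `y₁,…,y_n` (targets) be `2n` mutually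
independent uniform points in the unit square (modeled by the product measure on pairs of
configurations `ω = (x, y)`).  For `r > 0`, `0 < ε < 1` and `b = ⌈√2/r⌉`, if
`n ≥ b²·log(b²/ε)` then with probability at least `1 − ε` every target is within distance `r`
of some robot. -/
theorem stmt_12 (r ε : ℝ) (hr : 0 < r) (hε0 : 0 < ε) (hε1 : ε < 1) (n : ℕ)
    (hn : (⌈Real.sqrt 2 / r⌉₊ : ℝ) ^ 2 * Real.log ((⌈Real.sqrt 2 / r⌉₊ : ℝ) ^ 2 / ε) ≤ (n : ℝ)) :
    ENNReal.ofReal (1 - ε) ≤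
      ((Measure.pi fun _ : Fin n => unifSquare).prod (Measure.pi fun _ : Fin n => unifSquare))
        {ω : (Fin n → EuclideanSpace ℝ (Fin 2)) × (Fin n → EuclideanSpace ℝ (Fin 2)) |
          ∀ j : Fin n, ∃ i : Fin n, ‖ω.2 j - ω.1 i‖ ≤ r} := by
  have hcover := stmt_12_general (ι := Fin 2) (σ := Fin n) hr hε0 (by simpa using hn)
  exact (ENNReal.ofReal_le_of_le_toReal hcover).trans <| measure_le_measure_prod_of_ae
    (Filter.eventually_all.2 fun _ => Measure.tendsto_eval_ae_ae.eventually ae_mem_unitCube)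
    fun ω hω j => hω.1 (ω.2 j) (hω.2 j)
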